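/- Let k ≥ 4 and let (z₁, ..., z_k) be a cyclically oriented k-tuple of points of the unit circle S¹ with cross ratio coordinates λ_j = [z₂:z₃:z₁:z_{j+3}] for j = 1, ..., k−3. Then the cyclically permuted tuple (z_k, z₁, ..., z_{k−1}) is cyclically oriented, and its cross ratio coordinates λ̃_j = [z₁:z₂:z_k:z_{j+2}] satisfy λ̃₁ = 1 − λ_{k−3} and λ̃_j = (1 − λ_{k−3})/(1 − λ_{j−1}) for j = 2, ..., k−3. -/

import Mathlib

open Complex

/-- The cross ratio `[z₁:z₂:z₃:z₄] = (z₁-z₃)(z₂-z₄)/((z₂-z₃)(z₁-z₄))`. -/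
noncomputable def crossRatio (z₁ z₂ z₃ z₄ : ℂ) : ℂ :=
  ((z₁ - z₃) * (z₂ - z₄)) / ((z₂ - z₃) * (z₁ - z₄))

/-- A tuple `(z₁, …, z_k)` of points of `S¹` is *cyclically oriented* if it can be written as
`z_j = e^{iθ_j}` with `θ₁ < θ₂ < ⋯ < θ_k < θ₁ + 2π`. -/
def CyclicallyOriented {k : ℕ} (z : Fin k → ℂ) : Prop :=
  ∃ θ : Fin k → ℝ, StrictMono θ ∧ (∀ i j : Fin k, θ j < θ i + 2 * Real.pi) ∧
    ∀ j, z j = Complex.exp (θ j * Complex.I)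

/-! Exchanging the two middle points of a cross ratio `r` gives `1 - r`, so `1 - λ_j` is
`[z₁:z₀:z₂:z_{j+3}] = [z₀:z₁:z_{j+3}:z₂]`, and the quotient of two such cross ratios no longer
involves `z₂`: `[z₀:z₁:p:z₂] / [z₀:z₁:q:z₂] = [z₀:z₁:p:q]`. With `p` the last point and
`q = z_{j+2}` the right-hand side is the coordinate of the permuted tuple, whose cyclic orientation
is seen by lowering the last angle by `2π`. -/

section CrossRatio

lemma crossRatio_swap_swap (a b c d : ℂ) : crossRatio b a d c = crossRatio a b c d := by
  unfold crossRatio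
  ring

variable {a b c d : ℂ}

lemma one_sub_crossRatio (hbc : b ≠ c) (had : a ≠ d) :
    1 - crossRatio a b c d = crossRatio a c b d := by
  have hbc' : b - c ≠ 0 := sub_ne_zero.2 hbc
  have hcb' : c - b ≠ 0 := sub_ne_zero.2 hbc.symm
  have had' : a - d ≠ 0 := sub_ne_zero.2 had
  unfold crossRatio
  field_simp
  ring

lemma crossRatio_div_crossRatio (p q : ℂ) (hac : a ≠ c) (hbc : b ≠ c) :
    crossRatio a b p c / crossRatio a b q c = crossRatio a b p q := by
  have hac' : a - c ≠ 0 := sub_ne_zero.2 hac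
  have hbc' : b - c ≠ 0 := sub_ne_zero.2 hbc
  unfold crossRatio
  field_simp

end CrossRatio

namespace CyclicallyOriented

lemma injective {k : ℕ} {z : Fin k → ℂ} (hz : CyclicallyOriented z) : Function.Injective z := by
  obtain ⟨θ, hmono, hwidth, hexp⟩ := hz
  have hinj : Set.InjOn Circle.exp (Set.range θ) := by
    refine Circle.exp_injOn_of_forall_sub_mem_Ioo ?_
    rintro _ ⟨i, rfl⟩ _ ⟨j, rfl⟩
    constructor <;> linarith [hwidth i j, hwidth j i]
  intro i j hij
  refine hmono.injective (hinj ⟨i, rfl⟩ ⟨j, rfl⟩ (Circle.ext ?_))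
  rw [Circle.coe_exp, Circle.coe_exp, ← hexp, ← hexp, hij]

lemma cons_last_init {n : ℕ} {z : Fin (n + 1) → ℂ} (hz : CyclicallyOriented z) :
    CyclicallyOriented (Fin.cons (z (Fin.last n)) (Fin.init z) : Fin (n + 1) → ℂ) := by
  obtain ⟨θ, hmono, hwidth, hexp⟩ := hz
  refine ⟨Fin.cons (θ (Fin.last n) - 2 * Real.pi) (Fin.init θ), ?_, fun i j => ?_, fun j => ?_⟩
  · exact Fin.strictMono_cons.2
      ⟨fun i => sub_lt_iff_lt_add.2 (hwidth _ _), hmono.comp Fin.strictMono_castSucc⟩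
  · cases i using Fin.cases <;> cases j using Fin.cases <;>
      simp only [Fin.cons_zero, Fin.cons_succ, Fin.init]
    case zero.zero => linarith [Real.pi_pos]
    case zero.succ j => linarith [hmono (Fin.castSucc_lt_last j)]
    case succ.zero i => linarith [hwidth i.castSucc (Fin.last n), Real.pi_pos]
    case succ.succ i j => exact hwidth _ _
  · cases j using Fin.cases with
    | zero => simpa [sub_mul, Complex.exp_periodic.sub_eq] using hexp (Fin.last n)
    | succ j => exact hexp j.castSucc

end CyclicallyOriented

/-- **Cross ratio coordinates of a cyclic permutation.** If `(z₀, …, z_{k-1})` (0-indexed) is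
cyclically oriented with cross ratio coordinates `λ_j = [z₁:z₂:z₀:z_{j+3}]`, then the cyclically
permuted tuple `w = (z_{k-1}, z₀, …, z_{k-2})` is cyclically oriented and its cross ratio
coordinates `λ̃` satisfy `λ̃₀ = 1 - λ_{k-4}` and `λ̃_j = (1 - λ_{k-4})/(1 - λ_{j-1})` for
`1 ≤ j ≤ k-4` (0-indexed). -/
theorem crossRatio_coords_of_cyclic_shift (k : ℕ) (hk : 4 ≤ k) (z : Fin k → ℂ)
    (hcirc : ∀ j, ‖z j‖ = 1) (hcyc : CyclicallyOriented z)
    (lam : Fin (k - 3) → ℝ)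
    (hlam : ∀ j : Fin (k - 3),
      crossRatio (z ⟨1, by omega⟩) (z ⟨2, by omega⟩) (z ⟨0, by omega⟩)
          (z ⟨(j : ℕ) + 3, by have := j.isLt; omega⟩) = (lam j : ℂ))
    (w : Fin k → ℂ)
    (hw0 : w ⟨0, by omega⟩ = z ⟨k - 1, by omega⟩)
    (hw : ∀ j : Fin k, 1 ≤ (j : ℕ) →
      w j = z ⟨(j : ℕ) - 1, by have := j.isLt; omega⟩) :
    CyclicallyOriented w ∧
    crossRatio (w ⟨1, by omega⟩) (w ⟨2, by omega⟩) (w ⟨0, by omega⟩) (w ⟨3, by omega⟩)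
      = ((1 - lam ⟨k - 4, by omega⟩ : ℝ) : ℂ) ∧
    ∀ j : Fin (k - 3), 1 ≤ (j : ℕ) →
      crossRatio (w ⟨1, by omega⟩) (w ⟨2, by omega⟩) (w ⟨0, by omega⟩)
          (w ⟨(j : ℕ) + 3, by have := j.isLt; omega⟩)
        = (((1 - lam ⟨k - 4, by omega⟩) /
            (1 - lam ⟨(j : ℕ) - 1, by have := j.isLt; omega⟩) : ℝ) : ℂ) := by
  obtain ⟨n, rfl⟩ : ∃ n, k = n + 4 := Nat.exists_eq_add_of_le' hk
  obtain rfl : w = Fin.cons (z (Fin.last _)) (Fin.init z) :=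
    funext (Fin.cases hw0 fun i => hw i.succ (Nat.succ_pos i))
  have hne {i j : Fin (n + 4)} (hij : (i : ℕ) ≠ j) : z i ≠ z j :=
    hcyc.injective.ne (Fin.val_ne_iff.1 hij)
  have hne₀₂ : z ⟨0, by omega⟩ ≠ z ⟨2, by omega⟩ := hne (by simp)
  have hne₁₂ : z ⟨1, by omega⟩ ≠ z ⟨2, by omega⟩ := hne (by simp)
  have one_sub_lam (j : Fin (n + 4 - 3)) : ((1 - lam j : ℝ) : ℂ) =
      crossRatio (z ⟨0, by omega⟩) (z ⟨1, by omega⟩) (z ⟨j + 3, by omega⟩) (z ⟨2, by omega⟩) := by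
    rw [Complex.ofReal_sub, Complex.ofReal_one, ← hlam j,
      one_sub_crossRatio hne₀₂.symm (hne (by simp)), crossRatio_swap_swap]
  refine ⟨hcyc.cons_last_init, (one_sub_lam ⟨n, by omega⟩).symm, ?_⟩
  rintro ⟨_ | j, hj⟩ hj_pos
  · exact absurd hj_pos (Nat.not_succ_le_zero 0)
  · rw [Complex.ofReal_div, one_sub_lam, one_sub_lam,
      crossRatio_div_crossRatio _ _ hne₀₂ hne₁₂]
    rfl
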